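/- There are no integers x, y, z with gcd(x,y) = 1 satisfying 7x^2 + y^8 = 4z^3. -/

import Mathlib

/-!
In the Euclidean ring `ℤ[(1 + √-7) / 2]` the equation says that the norm of
`(y ^ 4 + x √-7) / 2` is `z ^ 3`. This element is coprime to its conjugate and the units are `±1`,
so it is a cube `((u + v √-7) / 2) ^ 3`; comparing real parts, `4 y ^ 4 = u (u ^ 2 - 21 v ^ 2)`.

Here `7 ∤ u`, and `u` and `(u ^ 2 - 21 v ^ 2) / 4` have at most the prime `3` in common.
If `3 ∤ u`, both are fourth powers up to constants and `a ^ 8 - 21 v ^ 2 = ± 4 b ^ 4`; this fails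
modulo `3`, for the sign `+` after factoring `(a ^ 4 - 2 b ^ 2) (a ^ 4 + 2 b ^ 2) = 21 v ^ 2`.
If `3 ∣ u`, congruences modulo `3` leave only `7 v ^ 2 = 3 (9 a ^ 4) ^ 2 + 4 (b ^ 2) ^ 2`. The conic
`7 v ^ 2 = 3 X ^ 2 + 4 Y ^ 2` is parametrized by binary quadratic forms in `p`, `q`, and modulo `8`
the conditions `X = 9 a ^ 4`, `Y = b ^ 2` force `8 ∣ q`. Then `X = (p + 2 q) ^ 2 - 7 q ^ 2` gives a
second factorization, whose outcomes `3 a ^ 2 = ± (m ^ 2 - 7 n ^ 2)` fail modulo `7` or `8`.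
-/

theorem exists_eq_mul_pow_of_mul_eq_mul_pow {R : Type*} [CommRing R] [IsDomain R] [IsBezout R]
    {g h c d : R} {k : ℕ} (hk : k ≠ 0) (hd : d ≠ 0) (hgh : IsCoprime g h)
    (e : g * h = d * c ^ k) :
    ∃ d₁ d₂ m n, d₁ * d₂ = d ∧ m * n = c ∧ g = d₁ * m ^ k ∧ h = d₂ * n ^ k := by
  obtain ⟨d₁, d₂, ⟨g, rfl⟩, ⟨h, rfl⟩, rfl⟩ := exists_dvd_and_dvd_of_dvd_mul (Dvd.intro _ e.symm)
  have hpow : g * h = c ^ k := mul_left_cancel₀ hd (by rw [← e]; ring)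
  have hcop : IsCoprime g h := hgh.of_mul_left_right.of_mul_right_right
  obtain ⟨m, u, rfl⟩ := exists_associated_pow_of_mul_eq_pow' hcop hpow
  obtain ⟨n, rfl⟩ : m ∣ c :=
    (IsIntegrallyClosed.pow_dvd_pow_iff hk).1 ⟨u * h, by rw [← hpow, mul_assoc]⟩
  rcases eq_or_ne m 0 with rfl | hm
  · obtain ⟨v, rfl⟩ : IsUnit h := by simpa [hk, isCoprime_zero_left] using hcop
    exact ⟨d₁ * ↑v⁻¹, d₂ * v, 0, 1, by rw [mul_mul_mul_comm]; simp, by simp, by simp [hk], by simp⟩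
  · have hn : u * h = n ^ k :=
      mul_left_cancel₀ (pow_ne_zero k hm) (by rw [← mul_pow, ← hpow, mul_assoc])
    exact ⟨d₁ * u, d₂ * ↑u⁻¹, m, n, by rw [mul_mul_mul_comm]; simp, rfl, by ring,
      by rw [← hn, mul_assoc, Units.inv_mul_cancel_left]⟩

theorem exists_mul_eq_and_eq_sub_of_sq_eq_sq_add {A B c d : ℤ} (hd : d ≠ 0)
    (hA : IsCoprime A (d * c)) (h : B ^ 2 = A ^ 2 + 4 * d * c ^ 2) :
    ∃ d₁ d₂ m n, d₁ * d₂ = d ∧ m * n = c ∧ A = d₁ * m ^ 2 - d₂ * n ^ 2 := by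
  have hpar : Even (B - A) := by
    have : Even (B ^ 2 - A ^ 2) := ⟨2 * d * c ^ 2, by rw [h]; ring⟩
    simpa only [Int.even_sub, Int.even_pow' two_ne_zero] using this
  obtain ⟨f, hf⟩ := hpar
  have hprod : (A + f) * f = d * c ^ 2 := by
    rw [sub_eq_iff_eq_add.1 hf] at h
    linarith
  have hcop : IsCoprime (A + f) f := by
    have : IsCoprime A ((A + f) * f) := by
      rw [hprod, pow_two, ← mul_assoc]
      exact hA.mul_right hA.of_mul_right_right
    simpa using this.of_mul_right_right.add_mul_left_left 1
  obtain ⟨d₁, d₂, m, n, hd₁₂, hmn, hm, hn⟩ :=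
    exists_eq_mul_pow_of_mul_eq_mul_pow two_ne_zero hd hcop hprod
  exact ⟨d₁, d₂, m, n, hd₁₂, hmn, by linarith⟩

theorem exists_mul_eq_and_eq_sub_or_of_sq_eq_sq_add {A B c p : ℤ} (hp : Prime p)
    (hA : IsCoprime A (p * c)) (h : B ^ 2 = A ^ 2 + 4 * p * c ^ 2) :
    ∃ m n, m * n = c ∧ (A = m ^ 2 - p * n ^ 2 ∨ A = p * n ^ 2 - m ^ 2) := by
  obtain ⟨d₁, d₂, m, n, rfl, rfl, rfl⟩ :=
    exists_mul_eq_and_eq_sub_of_sq_eq_sq_add hp.ne_zero hA h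
  rcases hp.irreducible.isUnit_or_isUnit rfl with hd | hd <;>
    obtain rfl | rfl := Int.isUnit_iff.1 hd
  · exact ⟨m, n, rfl, .inl (by ring)⟩
  · exact ⟨m, n, rfl, .inr (by ring)⟩
  · exact ⟨n, m, mul_comm .., .inr (by ring)⟩
  · exact ⟨n, m, mul_comm .., .inl (by ring)⟩

theorem exists_abs_two_mul_sub_mul_le (a : ℤ) {N : ℤ} (hN : 0 < N) :
    ∃ k, |2 * (a - N * k)| ≤ N := by
  lift N to ℕ using hN.le
  have hN' : 0 < N := by exact_mod_cast hN
  refine ⟨a.bdiv N, abs_le.2 ?_⟩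
  rw [← Int.bmod_eq_self_sub_mul_bdiv]
  have := Int.le_bmod (x := a) hN'
  have := Int.bmod_lt (x := a) hN'
  constructor <;> omega

theorem isCoprime_star_of_isCoprime_trace_norm {R : Type*} [CommRing R] {a b : R}
    {z : QuadraticAlgebra R a b} (h : IsCoprime z.trace z.norm) : IsCoprime z (star z) := by
  have := h.map (algebraMap R (QuadraticAlgebra R a b))
  rw [QuadraticAlgebra.algebraMap_trace_eq_add_star,
    QuadraticAlgebra.algebraMap_norm_eq_mul_star] at this
  exact .of_add_mul_left_left (z := 1) (by rw [mul_one]; exact this.of_mul_right_right)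

/-- The imaginary quadratic order `ℤ[ω]` with `ω ^ 2 = ω - m`, of discriminant `1 - 4 * m`. -/
abbrev QuadraticOrder (m : ℤ) := QuadraticAlgebra ℤ (-m) 1

namespace QuadraticOrder

variable {m : ℤ}

theorem four_mul_norm (z : QuadraticOrder m) :
    4 * z.norm = (2 * z.re + z.im) ^ 2 + (4 * m - 1) * z.im ^ 2 := by
  rw [QuadraticAlgebra.norm_def]
  ring

theorem norm_nonneg (hm : 0 < m) (z : QuadraticOrder m) : 0 ≤ z.norm := by
  have : 0 ≤ 4 * m - 1 := by lia
  have := z.four_mul_norm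
  have : 0 ≤ (2 * z.re + z.im) ^ 2 + (4 * m - 1) * z.im ^ 2 := by positivity
  linarith

theorem norm_eq_zero_iff (hm : 0 < m) {z : QuadraticOrder m} : z.norm = 0 ↔ z = 0 := by
  refine ⟨fun h ↦ ?_, fun h ↦ by simp [h]⟩
  have hsum := z.four_mul_norm
  rw [h] at hsum
  have him : z.im = 0 := by
    by_contra h0
    nlinarith [sq_nonneg (2 * z.re + z.im), sq_pos_of_ne_zero h0]
  have hre : z.re = 0 := by simpa [him] using hsum.symm
  exact QuadraticAlgebra.ext hre him

theorem eq_one_or_eq_neg_one_of_isUnit (hm : 2 ≤ m) {z : QuadraticOrder m} (hz : IsUnit z) :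
    z = 1 ∨ z = -1 := by
  have hnorm : z.norm = 1 :=
    (Int.isUnit_iff.1 (QuadraticAlgebra.isUnit_iff_norm_isUnit.1 hz)).resolve_right
      fun h ↦ by linarith [z.norm_nonneg (by lia)]
  have hsum := z.four_mul_norm
  rw [hnorm] at hsum
  have him : z.im = 0 := by
    by_contra h0
    nlinarith [sq_nonneg (2 * z.re + z.im), sq_pos_of_ne_zero h0]
  have hre : z.re ^ 2 = 1 := by
    rw [him] at hsum
    linarith
  rcases sq_eq_one_iff.1 hre with h | h
  · exact .inl (QuadraticAlgebra.ext h him)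
  · exact .inr (QuadraticAlgebra.ext h (him.trans neg_zero.symm))

theorem exists_norm_sub_mul_lt (hm : 0 < m) (hm' : m ≤ 3) (x : QuadraticOrder m)
    {y : QuadraticOrder m} (hy : y ≠ 0) : ∃ q, (x - y * q).norm < y.norm := by
  set N := y.norm with hN
  have hNpos : 0 < N := (norm_nonneg hm y).lt_of_ne' ((norm_eq_zero_iff hm).not.2 hy)
  obtain ⟨l, hl⟩ := exists_abs_two_mul_sub_mul_le (x * star y).im hNpos
  obtain ⟨k, hk⟩ := exists_abs_two_mul_sub_mul_le
    (2 * (x * star y).re + ((x * star y).im - N * l)) (mul_pos two_pos hNpos)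
  set f := (x * star y).im - N * l with hf
  set e := (x * star y).re - N * k with he
  have hk' : |2 * e + f| ≤ N := by
    rw [abs_le] at hk ⊢
    constructor <;> linarith
  let q : QuadraticOrder m := ⟨k, l⟩
  have hrem : (x - y * q) * star y = ⟨e, f⟩ := by
    have : (x - y * q) * star y = x * star y - algebraMap ℤ (QuadraticOrder m) N * q := by
      rw [hN, QuadraticAlgebra.algebraMap_norm_eq_mul_star]
      ring
    rw [this]
    ext <;> simp [q, hf, he]
  have hnorm : 4 * ((x - y * q).norm * N) = (2 * e + f) ^ 2 + (4 * m - 1) * f ^ 2 := by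
    rw [hN, ← QuadraticAlgebra.norm_star y, ← map_mul, hrem, four_mul_norm]
  have he2 : (2 * e + f) ^ 2 ≤ N ^ 2 := sq_le_sq' (abs_le.1 hk').1 (abs_le.1 hk').2
  have hf2 : (2 * f) ^ 2 ≤ N ^ 2 := sq_le_sq' (abs_le.1 hl).1 (abs_le.1 hl).2
  -- The bounds give `16 * (norm * N) ≤ (4 * m + 3) * N ^ 2`, and `4 * m + 3 < 16`.
  refine ⟨q, lt_of_mul_lt_mul_right (a := N) ?_ hNpos.le⟩
  nlinarith [mul_le_mul_of_nonneg_left hf2 (by lia : 0 ≤ 4 * m - 1)]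

theorem isDomain (hm : 0 < m) : IsDomain (QuadraticOrder m) := by
  have : NoZeroDivisors (QuadraticOrder m) :=
    ⟨fun {x y} h ↦ by simpa [norm_eq_zero_iff hm] using congrArg QuadraticAlgebra.norm h⟩
  exact NoZeroDivisors.to_isDomain _

theorem isPrincipalIdealRing (hm : 0 < m) (hm' : m ≤ 3) :
    IsPrincipalIdealRing (QuadraticOrder m) := by
  refine ⟨fun I ↦ ?_⟩
  rcases eq_or_ne I ⊥ with rfl | hI
  · infer_instance
  obtain ⟨y, ⟨hyI, hy⟩, hmin⟩ :=
    (measure fun z : QuadraticOrder m ↦ z.norm.natAbs).wf.has_min {z | z ∈ I ∧ z ≠ 0}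
      (Submodule.exists_mem_ne_zero_of_ne_bot hI)
  refine ⟨y, le_antisymm (fun x hx ↦ ?_) ((Ideal.span_singleton_le_iff_mem I).2 hyI)⟩
  obtain ⟨q, hq⟩ := exists_norm_sub_mul_lt hm hm' x hy
  have hr : x - y * q = 0 := by
    by_contra h0
    refine hmin _ ⟨I.sub_mem hx (I.mul_mem_right q hyI), h0⟩ ?_
    exact Int.natAbs_lt_natAbs_of_nonneg_of_lt (norm_nonneg hm _) hq
  exact Ideal.mem_span_singleton.2 ⟨q, sub_eq_zero.1 hr⟩

theorem exists_eq_cube_of_norm_eq_cube (hm : 2 ≤ m) (hm' : m ≤ 3) {α : QuadraticOrder m} {z : ℤ}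
    (hα : IsCoprime α.trace α.norm) (h : α.norm = z ^ 3) : ∃ γ, α = γ ^ 3 := by
  have := isDomain (m := m) (by lia)
  have := isPrincipalIdealRing (m := m) (by lia) hm'
  have hmul : α * star α = 1 * (algebraMap ℤ (QuadraticOrder m) z) ^ 3 := by
    rw [← QuadraticAlgebra.algebraMap_norm_eq_mul_star, h, map_pow, one_mul]
  obtain ⟨d₁, d₂, γ, -, hd, -, rfl, -⟩ := exists_eq_mul_pow_of_mul_eq_mul_pow three_ne_zero
    one_ne_zero (isCoprime_star_of_isCoprime_trace_norm hα) hmul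
  rcases eq_one_or_eq_neg_one_of_isUnit hm (.of_mul_eq_one _ hd) with rfl | rfl
  · exact ⟨γ, one_mul _⟩
  · exact ⟨-γ, by ring⟩

end QuadraticOrder

open QuadraticOrder in
theorem exists_of_sq_add_mul_sq_eq_four_mul_cube {m x y z : ℤ} (hm : 2 ≤ m) (hm' : m ≤ 3)
    (hxy : IsCoprime ((4 * m - 1) * x) y) (h : y ^ 2 + (4 * m - 1) * x ^ 2 = 4 * z ^ 3) :
    ∃ u v, 4 * y = u * (u ^ 2 - 3 * (4 * m - 1) * v ^ 2) ∧
      4 * x = v * (3 * u ^ 2 - (4 * m - 1) * v ^ 2) := by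
  obtain ⟨c, rfl⟩ : ∃ c, y = 2 * c + x := by
    have hpar : Even (y - x) := by
      have : Even (y ^ 2 - x ^ 2) := ⟨2 * z ^ 3 - 2 * m * x ^ 2, by linear_combination h⟩
      simpa only [Int.even_sub, Int.even_pow' two_ne_zero] using this
    obtain ⟨c, hc⟩ := hpar
    exact ⟨c, by linarith⟩
  let α : QuadraticOrder m := ⟨c, x⟩
  have htrace : α.trace = 2 * c + x := by simp [α, QuadraticAlgebra.trace_def]
  have hnorm : α.norm = z ^ 3 := by
    have : 4 * α.norm = 4 * z ^ 3 := by rw [four_mul_norm, ← h]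
    linarith
  have hcop : IsCoprime α.trace α.norm := by
    have : IsCoprime (2 * c + x) (4 * z ^ 3) := by
      have hx := hxy.symm.mul_right hxy.symm.of_mul_right_right
      rw [← h, show (2 * c + x) ^ 2 + (4 * m - 1) * x ^ 2 =
        (4 * m - 1) * x * x + (2 * c + x) * (2 * c + x) by ring]
      exact hx.add_mul_left_right _
    rw [htrace, hnorm]
    exact this.of_mul_right_right
  obtain ⟨γ, hγ⟩ := exists_eq_cube_of_norm_eq_cube hm hm' hcop hnorm
  have hre := congrArg QuadraticAlgebra.re hγ
  have him := congrArg QuadraticAlgebra.im hγ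
  simp only [α, pow_succ, pow_zero, one_mul, QuadraticAlgebra.re_mul, QuadraticAlgebra.im_mul]
    at hre him
  refine ⟨2 * γ.re + γ.im, γ.im, ?_, ?_⟩
  · rw [hre, him]
    ring
  · rw [him]
    ring

theorem not_modEq_one_of_sq_eq_four_mul_sq_add {X Y v : ℤ} (hXY : IsCoprime X Y) (hodd : Odd X)
    (hpos : 0 < X) (h : X ^ 2 = 4 * Y ^ 2 + 21 * v ^ 2) : ¬ X ≡ 1 [ZMOD 3] := by
  have hcop : IsCoprime (X - 2 * Y) (X + 2 * Y) := by
    have h2 : IsCoprime (X - 2 * Y) 2 :=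
      Int.isCoprime_two_right.2 (hodd.sub_even (even_two_mul Y))
    have hY : IsCoprime (X - 2 * Y) Y := by
      simpa [sub_eq_add_neg, mul_comm] using hXY.add_mul_left_left (-2)
    have := (h2.mul_right (h2.mul_right hY)).add_mul_left_right 1
    rwa [show 2 * (2 * Y) + (X - 2 * Y) * 1 = X + 2 * Y by ring] at this
  obtain ⟨d₁, d₂, m, n, hd, -, hm, hn⟩ := exists_eq_mul_pow_of_mul_eq_mul_pow two_ne_zero
    (by norm_num) hcop (show (X - 2 * Y) * (X + 2 * Y) = 21 * v ^ 2 by linarith)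
  have hsum : 2 * X = d₁ * m ^ 2 + d₂ * n ^ 2 := by linarith
  have hd₁ : 0 < d₁ := by
    by_contra! hneg
    have hd₂ : d₂ < 0 := by nlinarith
    nlinarith [sq_nonneg m, sq_nonneg n]
  have hle : d₁ ≤ 21 := Int.le_of_dvd (by norm_num) (Dvd.intro _ hd)
  have hsq (k : ℤ) : k ^ 2 % 3 = 0 ∨ k ^ 2 % 3 = 1 := by
    obtain h | h | h : k % 3 = 0 ∨ k % 3 = 1 ∨ k % 3 = 2 := by lia
    all_goals simp [pow_two, Int.mul_emod, h]
  have hm := hsq m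
  have hn := hsq n
  unfold Int.ModEq
  interval_cases d₁ <;> lia

theorem exists_eq_of_seven_mul_sq_eq {X Y v : ℤ} (hXY : IsCoprime X Y) (hY : Y ≡ 1 [ZMOD 3])
    (h7 : X ≡ Y [ZMOD 7]) (h : 7 * v ^ 2 = 3 * X ^ 2 + 4 * Y ^ 2) :
    ∃ p q, X = p ^ 2 + 4 * p * q - 3 * q ^ 2 ∧ Y = p ^ 2 - 3 * p * q - 3 * q ^ 2 := by
  obtain ⟨R, hR⟩ := h7.symm.dvd
  -- These coordinates turn the conic into `v ^ 2 = P ^ 2 + 12 * R ^ 2`.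
  obtain ⟨P, hP⟩ : ∃ P, P = Y + 3 * R := ⟨_, rfl⟩
  obtain rfl : X = P + 4 * R := by linarith
  obtain rfl : Y = P - 3 * R := by linarith
  have hPR : IsCoprime P R := by
    obtain ⟨s, t, hst⟩ := hXY
    exact ⟨s + t, 4 * s - 3 * t, by linarith⟩
  have hP3 : IsCoprime P 3 := by
    obtain ⟨k, hk⟩ := hY.dvd
    exact ⟨1, k - R, by linarith⟩
  obtain ⟨m, n, rfl, hmn | hmn⟩ := exists_mul_eq_and_eq_sub_or_of_sq_eq_sq_add Int.prime_three
    (hP3.mul_right hPR) (show v ^ 2 = P ^ 2 + 4 * 3 * R ^ 2 by linarith)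
  · exact ⟨m, n, by rw [hmn]; ring, by rw [hmn]; ring⟩
  · have hmod : ∀ a b r : ZMod 3, 3 * b - a ^ 2 - 3 * r ≠ 1 := by decide
    refine absurd ?_ (hmod m (n ^ 2) (m * n))
    have := (ZMod.intCast_eq_intCast_iff _ _ 3).2 hY
    rw [hmn] at this
    exact_mod_cast this

theorem three_mul_sq_ne_sq_sub_seven_mul_sq {a : ℤ} (ha : ¬ 7 ∣ a) (m n : ℤ) :
    3 * a ^ 2 ≠ m ^ 2 - 7 * n ^ 2 := by
  intro h
  have hmod : ∀ a m n : ZMod 7, 3 * a ^ 2 = m ^ 2 - 7 * n ^ 2 → a = 0 := by decide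
  refine ha ((ZMod.intCast_zmod_eq_zero_iff_dvd a 7).1 (hmod a m n ?_))
  exact_mod_cast congrArg (Int.cast : ℤ → ZMod 7) h

theorem intCast_sq_zmod_eight_eq_one {a : ℤ} (ha : Odd a) : (a : ZMod 8) ^ 2 = 1 := by
  have := (ZMod.intCast_zmod_eq_zero_iff_dvd _ 8).2 (Int.eight_dvd_sq_sub_one_of_odd ha)
  push_cast at this
  exact sub_eq_zero.1 this

theorem three_mul_sq_ne_seven_mul_sq_sub {a m n : ℤ} (ha : Odd a) (hmn : 4 ∣ m * n) :
    3 * a ^ 2 ≠ 7 * n ^ 2 - m ^ 2 := by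
  intro h
  have hmod : ∀ a m n : ZMod 8, a ^ 2 = 1 → 2 * (m * n) = 0 → 3 * a ^ 2 ≠ 7 * n ^ 2 - m ^ 2 := by
    decide
  refine hmod a m n (intCast_sq_zmod_eight_eq_one ha) ?_ ?_
  · exact_mod_cast (ZMod.intCast_zmod_eq_zero_iff_dvd _ 8).2 (mul_dvd_mul_left 2 hmn)
  · exact_mod_cast congrArg (Int.cast : ℤ → ZMod 8) h

theorem nine_mul_pow_four_ne_of_eight_dvd {a q : ℤ} (ha : Odd a) (hq : 8 ∣ q)
    (haq : IsCoprime (3 * a) (7 * q)) (p : ℤ) : 9 * a ^ 4 ≠ p ^ 2 + 4 * p * q - 3 * q ^ 2 := by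
  intro h
  obtain ⟨i, rfl⟩ := hq
  have hcop : IsCoprime (3 * a ^ 2) (7 * (4 * i)) := by
    have : IsCoprime (3 * a ^ 2) (7 * (8 * i)) :=
      haq.of_mul_left_left.mul_left haq.of_mul_left_right.pow_left
    exact this.of_isCoprime_of_dvd_right ⟨2, by ring⟩
  have ha7 : ¬ 7 ∣ a :=
    (Prime.coprime_iff_not_dvd (by norm_num)).1 haq.of_mul_left_right.of_mul_right_left.symm
  obtain ⟨m, n, hmn, hsub | hsub⟩ := exists_mul_eq_and_eq_sub_or_of_sq_eq_sq_add
    (by norm_num) hcop (show (p + 2 * (8 * i)) ^ 2 = _ by linarith)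
  · exact three_mul_sq_ne_sq_sub_seven_mul_sq ha7 m n hsub
  · exact three_mul_sq_ne_seven_mul_sq_sub ha ⟨i, hmn⟩ hsub

theorem not_modEq_neg_of_seven_mul_sq_eq {X Y v : ℤ} (hXY : IsCoprime X Y)
    (hY : Y ≡ 1 [ZMOD 3]) (hX8 : (X : ZMod 8) = 1) (h : 7 * v ^ 2 = 3 * X ^ 2 + 4 * Y ^ 2) :
    ¬ X ≡ -Y [ZMOD 7] := by
  intro h7
  obtain ⟨p, q, hp, -⟩ := exists_eq_of_seven_mul_sq_eq hXY.neg_left hY (v := v)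
    (by simpa using h7.neg) (by linarith)
  have hpq : ∀ p q : ZMod 8, p ^ 2 + 4 * p * q - 3 * q ^ 2 ≠ -1 := by decide
  refine hpq p q ?_
  rw [← hX8]
  exact_mod_cast congrArg (Int.cast : ℤ → ZMod 8) hp.symm

theorem exists_eight_dvd_of_seven_mul_sq_eq {X Y v : ℤ} (hXY : IsCoprime X Y)
    (hY : Y ≡ 1 [ZMOD 3]) (hX8 : (X : ZMod 8) = 1) (hY8 : (Y : ZMod 8) = 1)
    (h7 : X ≡ Y [ZMOD 7]) (h : 7 * v ^ 2 = 3 * X ^ 2 + 4 * Y ^ 2) :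
    ∃ p q, 8 ∣ q ∧ IsCoprime X (7 * q) ∧ X = p ^ 2 + 4 * p * q - 3 * q ^ 2 := by
  obtain ⟨p, q, hp, hq⟩ := exists_eq_of_seven_mul_sq_eq hXY hY h7 h
  have hpq : ∀ p q : ZMod 8, p ^ 2 + 4 * p * q - 3 * q ^ 2 = 1 →
    p ^ 2 - 3 * p * q - 3 * q ^ 2 = 1 → q = 0 := by decide
  refine ⟨p, q, (ZMod.intCast_zmod_eq_zero_iff_dvd q 8).1 (hpq p q ?_ ?_), ?_, hp⟩
  · exact_mod_cast hp ▸ hX8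
  · exact_mod_cast hq ▸ hY8
  · have := hXY.neg_right.add_mul_left_right 1
    rw [show -Y + X * 1 = 7 * q * p by linarith] at this
    exact this.of_mul_right_left

theorem seven_mul_sq_ne_of_isCoprime {a b : ℤ} (ha : Odd a) (hb : Odd b)
    (hab : IsCoprime (3 * a) b) (v : ℤ) : 7 * v ^ 2 ≠ 243 * a ^ 8 + 4 * b ^ 4 := by
  intro h
  have hXY : IsCoprime (9 * a ^ 4) (b ^ 2) := by
    have h3 := hab.of_mul_left_left
    exact .pow_right (.mul_left (h3.mul_left h3) hab.of_mul_left_right.pow_left)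
  have hY : b ^ 2 ≡ 1 [ZMOD 3] :=
    Int.ModEq.pow_card_sub_one_eq_one Nat.prime_three hab.of_mul_left_left.symm
  have hX8 : ((9 * a ^ 4 : ℤ) : ZMod 8) = 1 := by
    push_cast
    rw [show 4 = 2 * 2 from rfl, pow_mul, intCast_sq_zmod_eight_eq_one ha]
    rfl
  have hY8 : ((b ^ 2 : ℤ) : ZMod 8) = 1 := by
    exact_mod_cast intCast_sq_zmod_eight_eq_one hb
  have hconic : 7 * v ^ 2 = 3 * (9 * a ^ 4) ^ 2 + 4 * (b ^ 2) ^ 2 := by linarith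
  have hprod : 7 ∣ (9 * a ^ 4 - b ^ 2) * (9 * a ^ 4 + b ^ 2) :=
    ⟨5 * v ^ 2 - 162 * a ^ 8 - 3 * b ^ 4, by linarith⟩
  rcases Prime.dvd_or_dvd (by norm_num) hprod with h7 | h7
  · obtain ⟨p, q, hq, hcop, hp⟩ := exists_eight_dvd_of_seven_mul_sq_eq hXY hY hX8 hY8
      (Int.modEq_iff_dvd.2 h7).symm hconic
    rw [show 9 * a ^ 4 = 3 * a * (3 * a ^ 3) by ring] at hcop
    exact nine_mul_pow_four_ne_of_eight_dvd ha hq hcop.of_mul_left_left p hp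
  · refine not_modEq_neg_of_seven_mul_sq_eq hXY hY hX8 hconic (Int.modEq_iff_dvd.2 ?_).symm
    rwa [sub_neg_eq_add]

theorem pow_eight_sub_ne_four_mul_pow_four {a b : ℤ} (ha : Odd a) (ha3 : ¬ 3 ∣ a)
    (hab : IsCoprime a b) (v : ℤ) : (a ^ 4) ^ 2 - 21 * v ^ 2 ≠ 4 * b ^ 4 := by
  intro h
  have hpos : 0 < a ^ 4 := by
    have : a ≠ 0 := fun h0 ↦ ha3 (h0 ▸ dvd_zero 3)
    positivity
  refine not_modEq_one_of_sq_eq_four_mul_sq_add (hab.pow (m := 4) (n := 2)) ha.pow hpos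
    (v := v) (by linarith) ?_
  have hcop := (Int.prime_three.coprime_iff_not_dvd.2 ha3).symm
  simpa [← pow_mul] using (Int.ModEq.pow_card_sub_one_eq_one Nat.prime_three hcop).pow 2

theorem pow_eight_sub_ne_neg_four_mul_pow_four {a : ℤ} (ha : ¬ 3 ∣ a) (b v : ℤ) :
    (-a ^ 4) ^ 2 - 21 * v ^ 2 ≠ -4 * b ^ 4 := by
  intro h
  have hmod : ∀ a b v : ZMod 3, (-a ^ 4) ^ 2 - 21 * v ^ 2 = -4 * b ^ 4 → a = 0 := by decide
  refine ha ((ZMod.intCast_zmod_eq_zero_iff_dvd a 3).1 (hmod a b v ?_))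
  exact_mod_cast congrArg (Int.cast : ℤ → ZMod 3) h

theorem isCoprime_sq_sub_of_not_dvd {u v : ℤ} (huv : IsCoprime u v) (h3 : ¬ 3 ∣ u) (h7 : ¬ 7 ∣ u) :
    IsCoprime u (u ^ 2 - 21 * v ^ 2) := by
  have hu3 := (Int.prime_three.coprime_iff_not_dvd.2 h3).symm
  have hu7 := ((Prime.coprime_iff_not_dvd (by norm_num)).2 h7).symm
  rw [show u ^ 2 - 21 * v ^ 2 = -(3 * 7 * v ^ 2) + u * u by ring]
  exact ((hu3.mul_right hu7).mul_right huv.pow_right).neg_right.add_mul_left_right u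

theorem pow_four_ne_mul_of_not_three_dvd {u v w : ℤ} (hu : Odd u) (huv : IsCoprime u v)
    (h7 : ¬ 7 ∣ u) (h3 : ¬ 3 ∣ u) (hw : u ^ 2 - 21 * v ^ 2 = 4 * w) (y : ℤ) : y ^ 4 ≠ u * w := by
  intro h
  have huw : IsCoprime u w := by
    have := isCoprime_sq_sub_of_not_dvd huv h3 h7
    rw [hw] at this
    exact this.of_mul_right_right
  obtain ⟨d₁, d₂, a, b, hd, -, rfl, rfl⟩ := exists_eq_mul_pow_of_mul_eq_mul_pow four_ne_zero
    one_ne_zero huw (by rw [one_mul, h])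
  have ha3 : ¬ 3 ∣ a := fun h ↦ h3 ((dvd_pow h four_ne_zero).mul_left _)
  obtain ⟨rfl, rfl⟩ | ⟨rfl, rfl⟩ := Int.mul_eq_one_iff_eq_one_or_neg_one.1 hd
  · simp only [one_mul] at hu hw huw
    have ha : Odd a := by simpa [parity_simps] using hu
    exact pow_eight_sub_ne_four_mul_pow_four ha ha3
      ((IsCoprime.pow_iff four_pos four_pos).1 huw) v hw
  · exact pow_eight_sub_ne_neg_four_mul_pow_four ha3 b v (by linarith)

theorem mul_ne_nine_mul_pow_four {k v w y : ℤ} (hy : Odd y) (hkv : IsCoprime k v)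
    (hv : ¬ 3 ∣ v) (h7 : ¬ 7 ∣ k) (hw : 3 * k ^ 2 - 7 * v ^ 2 = 4 * w) :
    k * w ≠ 9 * y ^ 4 := by
  intro h
  have hkw : IsCoprime k w := by
    have hk7 := ((Prime.coprime_iff_not_dvd (by norm_num)).2 h7).symm
    have := (hk7.mul_right (hkv.pow_right (n := 2))).neg_right.add_mul_left_right (3 * k)
    rw [show -(7 * v ^ 2) + k * (3 * k) = 4 * w by linarith] at this
    exact this.of_mul_right_right
  have hw3 : (w : ZMod 3) = -1 := by
    have hv3 : (v : ZMod 3) ≠ 0 := mt (ZMod.intCast_zmod_eq_zero_iff_dvd v 3).1 hv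
    have hmod : ∀ k v w : ZMod 3, v ≠ 0 → 3 * k ^ 2 - 7 * v ^ 2 = 4 * w → w = -1 := by decide
    refine hmod k v w hv3 ?_
    exact_mod_cast congrArg (Int.cast : ℤ → ZMod 3) hw
  obtain ⟨d₁, d₂, a, b, hd, rfl, rfl, rfl⟩ :=
    exists_eq_mul_pow_of_mul_eq_mul_pow four_ne_zero (by norm_num) hkw h
  have hd₂ : IsUnit d₂ := by
    have hd₂3 : ¬ 3 ∣ d₂ := fun h0 ↦ by
      have := (ZMod.intCast_zmod_eq_zero_iff_dvd _ 3).2 (h0.mul_right (b ^ 4))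
      exact absurd (hw3.symm.trans this) (by decide)
    have hcop : IsCoprime d₂ (3 * 3) := by
      have := (Int.prime_three.coprime_iff_not_dvd.2 hd₂3).symm
      exact this.mul_right this
    exact hcop.isUnit_of_dvd' dvd_rfl ⟨d₁, by linarith⟩
  obtain rfl | rfl := Int.isUnit_iff.1 hd₂
  · have hmod : ∀ b : ZMod 3, 1 * b ^ 4 ≠ -1 := by decide
    exact hmod b (by exact_mod_cast hw3)
  · obtain rfl : d₁ = -9 := by linarith
    rw [Int.odd_mul] at hy
    refine seven_mul_sq_ne_of_isCoprime hy.1 hy.2 ?_ v (by linarith)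
    rw [show -9 * a ^ 4 = 3 * a * (-3 * a ^ 3) by ring,
      show -1 * b ^ 4 = b * (-b ^ 3) by ring] at hkw
    exact hkw.of_mul_left_left.of_mul_right_left

theorem pow_four_ne_mul_of_three_dvd {u v w y : ℤ} (hy : Odd y) (huv : IsCoprime u v)
    (h7 : ¬ 7 ∣ u) (h3 : 3 ∣ u) (hw : u ^ 2 - 21 * v ^ 2 = 4 * w) : y ^ 4 ≠ u * w := by
  intro h
  obtain ⟨k, rfl⟩ := h3
  have h3v : ¬ 3 ∣ v := Int.prime_three.coprime_iff_not_dvd.1 huv.of_mul_left_left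
  obtain ⟨w, rfl⟩ : 3 ∣ w := by lia
  obtain ⟨y, rfl⟩ : 3 ∣ y := Int.prime_three.dvd_of_dvd_pow ⟨3 * k * w, by rw [h]; ring⟩
  exact mul_ne_nine_mul_pow_four (Int.odd_mul.1 hy).2 huv.of_mul_left_right h3v
    (fun h ↦ h7 (h.mul_left 3)) (w := w) (by linarith) (by linarith)

theorem four_mul_pow_four_ne_mul_sq_sub {u v y : ℤ} (hu : Odd u) (hy : Odd y) (huv : IsCoprime u v)
    (h7 : ¬ 7 ∣ u) : 4 * y ^ 4 ≠ u * (u ^ 2 - 21 * v ^ 2) := by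
  intro h
  have h4u : IsCoprime 4 u := by
    have := Int.isCoprime_two_left.2 hu
    exact this.mul_left this
  obtain ⟨w, hw⟩ : 4 ∣ u ^ 2 - 21 * v ^ 2 := h4u.dvd_of_dvd_mul_left ⟨_, h.symm⟩
  have hyw : y ^ 4 = u * w := by
    rw [hw] at h
    linarith
  by_cases h3 : 3 ∣ u
  · exact pow_four_ne_mul_of_three_dvd hy huv h7 h3 hw hyw
  · exact pow_four_ne_mul_of_not_three_dvd hu huv h7 h3 hw y hyw

theorem odd_of_seven_mul_sq_add_pow_eight_eq {x y z : ℤ} (hxy : IsCoprime x y)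
    (h : 7 * x ^ 2 + y ^ 8 = 4 * z ^ 3) : Odd y := by
  have hpar : Even (7 * x ^ 2 + y ^ 8) := ⟨2 * z ^ 3, by rw [h]; ring⟩
  have hiff : Even x ↔ Even y := by
    simpa [parity_simps, show ¬ Even (7 : ℤ) by decide] using hpar
  by_contra hy
  have hy : Even y := Int.not_odd_iff_even.1 hy
  exact Int.prime_two.not_isUnit (hxy.isUnit_of_dvd' (hiff.2 hy).two_dvd hy.two_dvd)

theorem not_seven_dvd_of_seven_mul_sq_add_pow_eight_eq {x y z : ℤ} (hxy : IsCoprime x y)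
    (h : 7 * x ^ 2 + y ^ 8 = 4 * z ^ 3) : ¬ 7 ∣ y := by
  have h7 : Prime (7 : ℤ) := by norm_num
  rintro ⟨y, rfl⟩
  obtain ⟨z, rfl⟩ : 7 ∣ z := by
    have : 7 ∣ 4 * z ^ 3 := ⟨x ^ 2 + 7 ^ 7 * y ^ 8, by rw [← h]; ring⟩
    exact h7.dvd_of_dvd_pow ((h7.dvd_or_dvd this).resolve_left (by norm_num))
  have hx : 7 ∣ x := h7.dvd_of_dvd_pow (n := 2) ⟨28 * z ^ 3 - 7 ^ 6 * y ^ 8, by linarith⟩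
  exact h7.not_isUnit (hxy.isUnit_of_dvd' hx (dvd_mul_right 7 y))

theorem odd_of_four_mul_eq {x Y u v : ℤ} (hY : Odd Y)
    (hYuv : 4 * Y = u * (u ^ 2 - 21 * v ^ 2)) (hxuv : 4 * x = v * (3 * u ^ 2 - 7 * v ^ 2)) :
    Odd u ∧ Odd v := by
  have hu : Odd u := by
    by_contra hu
    have hu := Int.not_odd_iff_even.1 hu
    have hv : Even v := by
      have : Even (v * (3 * u ^ 2 - 7 * v ^ 2)) := ⟨2 * x, by rw [← hxuv]; ring⟩
      simpa [parity_simps, hu, show ¬ Even (7 : ℤ) by decide] using this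
    obtain ⟨s, rfl⟩ := hu.two_dvd
    obtain ⟨t, rfl⟩ := hv.two_dvd
    have : Y = 2 * (s * (s ^ 2 - 21 * t ^ 2)) := by linarith
    exact Int.not_even_iff_odd.2 hY (this ▸ even_two_mul _)
  refine ⟨hu, ?_⟩
  by_contra hv
  have hv := Int.not_odd_iff_even.1 hv
  have hodd : Odd (u * (u ^ 2 - 21 * v ^ 2)) :=
    hu.mul (hu.pow.sub_even ((hv.pow_of_ne_zero two_ne_zero).mul_left 21))
  exact Int.not_even_iff_odd.2 hodd ⟨2 * Y, by rw [← hYuv]; ring⟩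

theorem exists_four_mul_pow_four_eq {x y z : ℤ} (hxy : IsCoprime x y)
    (h : 7 * x ^ 2 + y ^ 8 = 4 * z ^ 3) :
    ∃ u v, Odd u ∧ IsCoprime u v ∧ ¬ 7 ∣ u ∧ 4 * y ^ 4 = u * (u ^ 2 - 21 * v ^ 2) := by
  have hy7 := not_seven_dvd_of_seven_mul_sq_add_pow_eight_eq hxy h
  have hcop : IsCoprime (7 * x) (y ^ 4) :=
    (((Prime.coprime_iff_not_dvd (by norm_num)).2 hy7).mul_left hxy).pow_right
  obtain ⟨u, v, hY, hX⟩ := exists_of_sq_add_mul_sq_eq_four_mul_cube (m := 2) (z := z) le_rfl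
    (by norm_num) hcop (by linarith)
  replace hY : 4 * y ^ 4 = u * (u ^ 2 - 21 * v ^ 2) := by rw [hY]; ring
  replace hX : 4 * x = v * (3 * u ^ 2 - 7 * v ^ 2) := by rw [hX]; ring
  obtain ⟨hu, hv⟩ := odd_of_four_mul_eq (odd_of_seven_mul_sq_add_pow_eight_eq hxy h).pow hY hX
  have dvd_of_odd {w t : ℤ} (hw : Odd w) (hdvd : w ∣ 4 * t) : w ∣ t := by
    have hw2 := Int.isCoprime_two_right.2 hw
    exact (hw2.mul_right hw2).dvd_of_dvd_mul_left hdvd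
  have huy : u ∣ y ^ 4 := dvd_of_odd hu ⟨_, hY⟩
  have hvx : v ∣ x := dvd_of_odd hv ⟨_, hX⟩
  refine ⟨u, v, hu, ?_, fun h7 ↦ ?_, hY⟩
  · exact (hcop.of_mul_left_right.symm.of_isCoprime_of_dvd_left huy).of_isCoprime_of_dvd_right hvx
  · exact hy7 (Prime.dvd_of_dvd_pow (by norm_num) (h7.trans huy))

theorem no_primitive_solutions_7x2_y8_4z3 :
    ¬ ∃ x y z : ℤ, Int.gcd x y = 1 ∧ 7 * x ^ 2 + y ^ 8 = 4 * z ^ 3 := by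
  rintro ⟨x, y, z, hgcd, h⟩
  have hxy : IsCoprime x y := Int.isCoprime_iff_gcd_eq_one.2 hgcd
  have hy : Odd y := odd_of_seven_mul_sq_add_pow_eight_eq hxy h
  obtain ⟨u, v, hu, huv, h7, heq⟩ := exists_four_mul_pow_four_eq hxy h
  exact four_mul_pow_four_ne_mul_sq_sub hu hy huv h7 heq
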